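/- Let N0, N1 be positive integers, L = lcm(N0, N1), and let a : {0,…,N0−1} × {0,…,N1−1} → ℂ be finitely supported, defining x_r(n0, n1) = Σ_{(m0,m1)} a(m0,m1)·exp(2πi·(m0·n0/N0 + m1·n1/N1)). For integers α0, α1, τ0, τ1, define for each m ∈ {0,…,L−1} the projected bins ŝ_r(m) = Σ a(m0,m1)·exp(2πi·(m0·τ0/N0 + m1·τ1/N1)), the sum over all (m0, m1) with m0·α0/N0 + m1·α1/N1 − m/L ∈ ℤ. Then for every l ∈ {0,…,L−1}, the inverse DFT Σ_{m=0}^{L−1} ŝ_r(m)·exp(2πi·l·m/L) equals x_r(α0·l + τ0, α1·l + τ1); i.e., the line samples of x_r are exactly reconstructed from its projected bins. -/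

import Mathlib

open Complex Finset
open scoped Classical

/-- The 2-D on-grid signal `x(n0,n1) = Σ_{(m0,m1)} a(m0,m1)·e^{2πi(m0·n0/N0 + m1·n1/N1)}`. -/
noncomputable def signal2D (N0 N1 : ℕ) (a : Fin N0 × Fin N1 → ℂ) (n0 n1 : ℤ) : ℂ :=
  ∑ p : Fin N0 × Fin N1, a p *
    Complex.exp (2 * (Real.pi : ℂ) * Complex.I *
      (((p.1 : ℕ) : ℂ) * (n0 : ℂ) / (N0 : ℂ) + ((p.2 : ℕ) : ℂ) * (n1 : ℂ) / (N1 : ℂ)))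

/-- The `L`-point DFT of the slice of the signal along the discrete line
`l ↦ (α0·l + τ0, α1·l + τ1)`, where `L = lcm(N0, N1)`. -/
noncomputable def sliceDFT (N0 N1 : ℕ) (a : Fin N0 × Fin N1 → ℂ)
    (α0 α1 τ0 τ1 : ℤ) (m : ℕ) : ℂ :=
  (1 / ((Nat.lcm N0 N1 : ℕ) : ℂ)) *
    ∑ l ∈ Finset.range (Nat.lcm N0 N1),
      signal2D N0 N1 a (α0 * l + τ0) (α1 * l + τ1) *
        Complex.exp (-(2 * (Real.pi : ℂ) * Complex.I * (l : ℂ) * (m : ℂ) /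
          ((Nat.lcm N0 N1 : ℕ) : ℂ)))

/-- The frequency grid point `(m0, m1)` projects onto bin `m`, i.e.
`m0·α0/N0 + m1·α1/N1 − m/L` is an integer. -/
def projectsTo (N0 N1 : ℕ) (α0 α1 : ℤ) (m : ℕ) (p : Fin N0 × Fin N1) : Prop :=
  ∃ k : ℤ, ((p.1 : ℕ) : ℝ) * (α0 : ℝ) / (N0 : ℝ) + ((p.2 : ℕ) : ℝ) * (α1 : ℝ) / (N1 : ℝ)
    - (m : ℝ) / ((Nat.lcm N0 N1 : ℕ) : ℝ) = (k : ℝ)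

/-!
The sinusoid at grid point `p` has, along the line, a frequency `ω p` with `L * ω p ∈ ℤ`, so modulo
`1` it equals `m / L` for exactly one `m < L`. Hence summing over the bins meets each grid point
once, and in its bin the factor `e^{2πi·l·m/L}` equals `e^{2πi·l·ω p}` because `l` is an integer.
-/

section Binning

variable {ι κ : Type*}

theorem sum_sum_filter_of_existsUnique {M : Type*} [AddCommMonoid M] (s : Finset ι)
    (t : Finset κ) (r : κ → ι → Prop) (f : ι → M) (h : ∀ i ∈ s, ∃! k, k ∈ t ∧ r k i) :
    ∑ k ∈ t, ∑ i ∈ s with r k i, f i = ∑ i ∈ s, f i := by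
  have card_fiber (i) (hi : i ∈ s) : #{k ∈ t | r k i} = 1 :=
    card_eq_one_iff_existsUnique.mpr (by simpa only [mem_filter] using h i hi)
  calc ∑ k ∈ t, ∑ i ∈ s with r k i, f i
    _ = ∑ i ∈ s, ∑ k ∈ t with r k i, f i := sum_comm' (by grind)
    _ = ∑ i ∈ s, f i := sum_congr rfl fun i hi ↦ by rw [sum_const, card_fiber i hi, one_nsmul]

theorem exp_two_pi_I_mul_intCast_mul_eq_of_modEq {x y : ℝ} (h : x ≡ y [PMOD 1]) (l : ℤ) :
    exp (2 * Real.pi * I * (l * x)) = exp (2 * Real.pi * I * (l * y)) := by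
  obtain ⟨k, rfl⟩ := AddCommGroup.modEq_iff_eq_add_zsmul.mp h
  rw [exp_eq_exp_iff_exists_int]
  refine ⟨-(l * k), ?_⟩
  push_cast [zsmul_one]
  ring

theorem sum_sum_filter_modEq_mul_exp (s : Finset ι) (t : Finset κ) (c : ι → ℂ) (ω : ι → ℝ)
    (ν : κ → ℝ) (h : ∀ i ∈ s, ∃! k, k ∈ t ∧ ω i ≡ ν k [PMOD 1]) (l : ℤ) :
    ∑ k ∈ t, (∑ i ∈ s with ω i ≡ ν k [PMOD 1], c i) * exp (2 * Real.pi * I * (l * ν k)) =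
      ∑ i ∈ s, c i * exp (2 * Real.pi * I * (l * ω i)) := by
  rw [← sum_sum_filter_of_existsUnique s t _ _ h]
  refine sum_congr rfl fun k _ ↦ ?_
  rw [sum_mul]
  refine sum_congr rfl fun i hi ↦ ?_
  rw [exp_two_pi_I_mul_intCast_mul_eq_of_modEq (mem_filter.mp hi).2]

end Binning

theorem intCast_div_modEq_intCast_div_iff {K : Type*} [Field K] [CharZero K] {L : ℕ} (hL : L ≠ 0)
    (a b : ℤ) : (a / L : K) ≡ b / L [PMOD 1] ↔ a ≡ b [ZMOD L] := by
  rw [AddCommGroup.div_modEq_div (Nat.cast_ne_zero.mpr hL), one_mul,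
    AddCommGroup.intCast_modEq_intCast', AddCommGroup.modEq_iff_intModEq]

theorem existsUnique_mem_range_intCast_div_modEq {K : Type*} [Field K] [CharZero K] {L : ℕ}
    (hL : L ≠ 0) (a : ℤ) : ∃! m, m ∈ range L ∧ (a / L : K) ≡ m / L [PMOD 1] := by
  have modEq_iff (m : ℕ) : (a / L : K) ≡ m / L [PMOD 1] ↔ a ≡ m [ZMOD L] :=
    by simpa only [Int.cast_natCast] using intCast_div_modEq_intCast_div_iff (K := K) hL a m
  simp only [modEq_iff, mem_range]
  obtain ⟨m, hm, hma⟩ := Int.existsUnique_equiv_nat a (mod_cast hL.pos : (0 : ℤ) < L)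
  refine ⟨m, ⟨mod_cast hm, hma.symm⟩, fun m' ⟨hm', ham'⟩ ↦ ?_⟩
  exact (Int.natCast_modEq_iff.mp (hma.trans ham').symm).eq_of_lt_of_lt hm' (mod_cast hm)

/-- The phase, in turns, at the sample `(n0, n1)` of the sinusoid with frequency
`(p.1 / N0, p.2 / N1)`. As it is additive in `(n0, n1)`, its value at a direction `(α0, α1)` is the
frequency of the sinusoid along lines in that direction. -/
noncomputable def gridPhase (N0 N1 : ℕ) (p : Fin N0 × Fin N1) (n0 n1 : ℤ) : ℝ :=
  (p.1 : ℕ) * n0 / N0 + (p.2 : ℕ) * n1 / N1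

section GridPhase

variable {N0 N1 : ℕ}

theorem gridPhase_line (p : Fin N0 × Fin N1) (α0 α1 τ0 τ1 l : ℤ) :
    gridPhase N0 N1 p (α0 * l + τ0) (α1 * l + τ1) =
      gridPhase N0 N1 p τ0 τ1 + l * gridPhase N0 N1 p α0 α1 := by
  unfold gridPhase
  push_cast
  ring

theorem exists_gridPhase_eq_intCast_div {L : ℕ} (hL : L ≠ 0) (h0 : N0 ∣ L) (h1 : N1 ∣ L)
    (p : Fin N0 × Fin N1) (n0 n1 : ℤ) : ∃ M : ℤ, gridPhase N0 N1 p n0 n1 = M / L := by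
  have exists_div_eq {N : ℕ} (hN : N ∣ L) (b : ℤ) : ∃ M : ℤ, (b / N : ℝ) = M / L := by
    obtain ⟨c, rfl⟩ := hN
    have hc : (c : ℝ) ≠ 0 := mod_cast right_ne_zero_of_mul hL
    exact ⟨b * c, by push_cast; exact (mul_div_mul_right _ _ hc).symm⟩
  obtain ⟨M0, hM0⟩ := exists_div_eq h0 ((p.1 : ℕ) * n0)
  obtain ⟨M1, hM1⟩ := exists_div_eq h1 ((p.2 : ℕ) * n1)
  push_cast at hM0 hM1
  exact ⟨M0 + M1, by rw [gridPhase, hM0, hM1, ← add_div, Int.cast_add]⟩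

theorem existsUnique_mem_range_lcm_gridPhase_modEq (p : Fin N0 × Fin N1) (n0 n1 : ℤ) :
    ∃! m, m ∈ range (N0.lcm N1) ∧
      gridPhase N0 N1 p n0 n1 ≡ m / (N0.lcm N1 : ℕ) [PMOD 1] := by
  have hL : N0.lcm N1 ≠ 0 := Nat.lcm_ne_zero p.1.pos.ne' p.2.pos.ne'
  obtain ⟨M, hM⟩ :=
    exists_gridPhase_eq_intCast_div hL (N0.dvd_lcm_left N1) (N0.dvd_lcm_right N1) p n0 n1
  rw [hM]
  exact existsUnique_mem_range_intCast_div_modEq hL M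

theorem projectsTo_iff_gridPhase_modEq (α0 α1 : ℤ) (m : ℕ) (p : Fin N0 × Fin N1) :
    projectsTo N0 N1 α0 α1 m p ↔
      gridPhase N0 N1 p α0 α1 ≡ m / (N0.lcm N1 : ℕ) [PMOD 1] := by
  rw [AddCommGroup.modEq_comm, AddCommGroup.modEq_iff_zsmul']
  simp only [zsmul_one, projectsTo, gridPhase]

theorem signal2D_line (a : Fin N0 × Fin N1 → ℂ) (α0 α1 τ0 τ1 l : ℤ) :
    signal2D N0 N1 a (α0 * l + τ0) (α1 * l + τ1) =
      ∑ p, a p * exp (2 * Real.pi * I * gridPhase N0 N1 p τ0 τ1) *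
        exp (2 * Real.pi * I * (l * gridPhase N0 N1 p α0 α1)) := by
  have signal2D_eq (n0 n1 : ℤ) : signal2D N0 N1 a n0 n1 =
      ∑ p, a p * exp (2 * Real.pi * I * gridPhase N0 N1 p n0 n1) := by
    simp [signal2D, gridPhase]
  simp only [signal2D_eq, gridPhase_line, ofReal_add, ofReal_mul, ofReal_intCast, mul_add, exp_add,
    mul_assoc]

end GridPhase

theorem fps_sft_line_reconstruction_general (N0 N1 : ℕ) (a : Fin N0 × Fin N1 → ℂ)
    (α0 α1 τ0 τ1 l : ℤ) :
    ∑ m ∈ range (N0.lcm N1),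
      (∑ p with projectsTo N0 N1 α0 α1 m p,
          a p * exp (2 * Real.pi * I * ((p.1 : ℕ) * τ0 / N0 + (p.2 : ℕ) * τ1 / N1))) *
        exp (2 * Real.pi * I * l * m / (N0.lcm N1 : ℕ)) =
      signal2D N0 N1 a (α0 * l + τ0) (α1 * l + τ1) := by
  rw [signal2D_line, ← sum_sum_filter_modEq_mul_exp univ (range (N0.lcm N1)) _ _
    (fun m ↦ m / (N0.lcm N1 : ℕ))
    fun p _ ↦ existsUnique_mem_range_lcm_gridPhase_modEq p α0 α1]
  simp [projectsTo_iff_gridPhase_modEq, gridPhase, mul_assoc, mul_div_assoc]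

/-- **Correctness of the subtraction step of FPS-SFT.** The line samples of the
recovered on-grid signal are exactly reconstructed by projecting the recovered
sinusoids into the `L` frequency bins and applying an `L`-point inverse DFT:
for every `l ∈ {0,…,L−1}`,
`Σ_{m=0}^{L−1} ŝ_r(m)·e^{2πi·l·m/L} = x_r(α0·l + τ0, α1·l + τ1)`, where
`ŝ_r(m) = Σ a(m0,m1)·e^{2πi(m0·τ0/N0 + m1·τ1/N1)}` over the pairs `(m0, m1)`
with `m0·α0/N0 + m1·α1/N1 − m/L ∈ ℤ`. -/
theorem fps_sft_line_reconstruction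
    (N0 N1 : ℕ) (hN0 : 0 < N0) (hN1 : 0 < N1)
    (a : Fin N0 × Fin N1 → ℂ) (α0 α1 τ0 τ1 : ℤ) :
    ∀ l ∈ Finset.range (Nat.lcm N0 N1),
      ∑ m ∈ Finset.range (Nat.lcm N0 N1),
        (∑ p ∈ Finset.univ.filter (projectsTo N0 N1 α0 α1 m),
            a p * Complex.exp (2 * (Real.pi : ℂ) * Complex.I *
              (((p.1 : ℕ) : ℂ) * (τ0 : ℂ) / (N0 : ℂ) +
                ((p.2 : ℕ) : ℂ) * (τ1 : ℂ) / (N1 : ℂ)))) *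
          Complex.exp (2 * (Real.pi : ℂ) * Complex.I * (l : ℂ) * (m : ℂ) /
            ((Nat.lcm N0 N1 : ℕ) : ℂ)) =
      signal2D N0 N1 a (α0 * l + τ0) (α1 * l + τ1) := by
  intro l _
  exact_mod_cast fps_sft_line_reconstruction_general N0 N1 a α0 α1 τ0 τ1 l
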